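/- arXiv:2111.11064 — 2 statements merged into one kernel-verified Lean document; each statement's English description precedes it below -/
import Mathlib

section
/- Let d be a positive natural number, let Σ be a positive definite real d×d matrix, and let g : ℝ^d → ℝ be the centered Gaussian density g(x) = (2π)^{-d/2} (det Σ)^{-1/2} exp(-xᵀ Σ⁻¹ x / 2). Let f : ℝ^d → ℝ be a bounded continuous probability density (f ≥ 0 and ∫ f = 1) with finite first moment (∫ ‖h‖ f(h) dh < ∞), and let (f_K)_{K∈ℕ} be a sequence of bounded probability densities on ℝ^d, each with finite first moment, such that sup_{h∈ℝ^d} |f(h) − f_K(h)| → 0 as K → ∞. For each y ∈ ℝ^d define the posterior means ĥ(y) = (∫ h · g(y−h) f(h) dh) / (∫ g(y−h) f(h) dh) and ĥ^{(K)}(y) = (∫ h · g(y−h) f_K(h) dh) / (∫ g(y−h) f_K(h) dh). Then for every y ∈ ℝ^d, ‖ĥ(y) − ĥ^{(K)}(y)‖ → 0 as K → ∞. -/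
/-!
The proof is dominated convergence at a fixed `y`. Since `S⁻¹` is positive definite, its quadratic
form dominates `c * ‖x‖ ^ 2` for some `c > 0`, so `h ↦ g (y - h)` and `h ↦ ‖h‖ * g (y - h)` are
integrable. Uniform convergence to the bounded density `f` gives `|fK K| ≤ M + 1` for all large `K`,
so `(M + 1) * g (y - h)` and `(M + 1) * g (y - h) * ‖h‖` dominate the integrands of the denominators
and numerators, and both converge (`tendsto_weighted_integral`). The limiting denominator is nonzero
because `g > 0` and `f` is not almost everywhere zero, so the quotients converge as well.
-/

open MeasureTheory Matrix Filter

/-- The Gaussian density with mean `m` and covariance matrix `A` on `ℝ^d`. -/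
noncomputable def gaussDensity {d : ℕ} (m : EuclideanSpace ℝ (Fin d)) (A : Matrix (Fin d) (Fin d) ℝ)
    (x : EuclideanSpace ℝ (Fin d)) : ℝ :=
  (2 * Real.pi) ^ (-(d : ℝ) / 2) * A.det ^ (-(1 : ℝ) / 2) *
    Real.exp (-((fun i => x i - m i) ⬝ᵥ (A⁻¹ *ᵥ fun i => x i - m i)) / 2)

/-- By compactness of the unit sphere, a positive definite quadratic form on `ℝ^d` is coercive. -/
lemma posDef_quadratic_lower_bound {d : ℕ} (hd : 0 < d) {A : Matrix (Fin d) (Fin d) ℝ}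
    (hA : A.PosDef) :
    ∃ c : ℝ, 0 < c ∧ ∀ x : EuclideanSpace ℝ (Fin d),
      c * ‖x‖ ^ 2 ≤ (fun i => x i) ⬝ᵥ (A *ᵥ fun i => x i) := by
  have : Nonempty (Fin d) := ⟨⟨0, hd⟩⟩
  have hcont : Continuous fun x : EuclideanSpace ℝ (Fin d) =>
      (fun i => x i) ⬝ᵥ (A *ᵥ fun i => x i) := by
    simp only [dotProduct, mulVec]
    fun_prop
  obtain ⟨u, hu, hmin⟩ := (isCompact_sphere (0 : EuclideanSpace ℝ (Fin d)) 1).exists_isMinOn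
    (NormedSpace.sphere_nonempty.mpr zero_le_one) hcont.continuousOn
  have hu1 : ‖u‖ = 1 := by simpa using hu
  refine ⟨(fun i => u i) ⬝ᵥ (A *ᵥ fun i => u i), ?_, fun x => ?_⟩
  · have hne : (fun i => u i) ≠ 0 := by
      intro h
      have : u = 0 := by
        ext i
        exact congrFun h i
      simp [this] at hu1
    simpa using hA.dotProduct_mulVec_pos hne
  · rcases eq_or_ne x 0 with rfl | hx
    · simp [dotProduct]
    have hx' : ‖x‖ ≠ 0 := norm_ne_zero_iff.mpr hx
    have hm := hmin (show ‖x‖⁻¹ • x ∈ Metric.sphere (0 : EuclideanSpace ℝ (Fin d)) 1 by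
      simp [norm_smul, hx'])
    have hs : (fun i => (‖x‖⁻¹ • x) i) = ‖x‖⁻¹ • (fun i => x i) := by
      ext i
      simp
    simp only [Set.mem_ofPred_eq, hs, mulVec_smul, dotProduct_smul, smul_dotProduct,
      smul_eq_mul] at hm
    calc _ ≤ (‖x‖⁻¹ * (‖x‖⁻¹ * ((fun i => x i) ⬝ᵥ (A *ᵥ fun i => x i)))) * ‖x‖ ^ 2 := by
          gcongr
      _ = _ := by field_simp

section Gaussian

variable {d : ℕ} {S : Matrix (Fin d) (Fin d) ℝ}

lemma continuous_gaussDensity : Continuous (gaussDensity (0 : EuclideanSpace ℝ (Fin d)) S) := by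
  unfold gaussDensity
  simp only [dotProduct, mulVec]
  fun_prop

lemma gaussDensity_pos (hS : S.PosDef) (x : EuclideanSpace ℝ (Fin d)) :
    0 < gaussDensity 0 S x := by
  have := hS.det_pos
  unfold gaussDensity
  positivity

lemma gaussDensity_le (hd : 0 < d) (hS : S.PosDef) :
    ∃ C c : ℝ, 0 < c ∧ ∀ x, gaussDensity 0 S x ≤ C * Real.exp (-c * ‖x‖ ^ 2) := by
  obtain ⟨c, hc, h⟩ := posDef_quadratic_lower_bound hd hS.inv
  have hdet := hS.det_pos
  refine ⟨(2 * Real.pi) ^ (-(d : ℝ) / 2) * S.det ^ (-(1 : ℝ) / 2), c / 2, by positivity,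
    fun x => ?_⟩
  unfold gaussDensity
  gcongr
  have := h x
  simp only [PiLp.zero_apply, sub_zero]
  linarith

lemma integrable_exp_neg_mul_sq_norm {b : ℝ} (hb : 0 < b) :
    Integrable fun x : EuclideanSpace ℝ (Fin d) => Real.exp (-b * ‖x‖ ^ 2) := by
  have h := (GaussianFourier.integrable_cexp_neg_mul_sq_norm_add (b := (b : ℂ))
    (V := EuclideanSpace ℝ (Fin d)) (by simpa using hb) 0 0).norm
  refine h.congr (ae_of_all _ fun x => ?_)
  simp only [Complex.norm_exp]
  congr 1
  simp [← Complex.ofReal_pow]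

lemma integrable_gaussDensity (hd : 0 < d) (hS : S.PosDef) :
    Integrable (gaussDensity (0 : EuclideanSpace ℝ (Fin d)) S) := by
  obtain ⟨C, c, hc, h⟩ := gaussDensity_le hd hS
  refine ((integrable_exp_neg_mul_sq_norm hc).const_mul C).mono'
    continuous_gaussDensity.aestronglyMeasurable (ae_of_all _ fun x => ?_)
  rw [Real.norm_of_nonneg (gaussDensity_pos hS x).le]
  exact h x

lemma integrable_norm_mul_gaussDensity (hd : 0 < d) (hS : S.PosDef) :
    Integrable fun x : EuclideanSpace ℝ (Fin d) => ‖x‖ * gaussDensity 0 S x := by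
  obtain ⟨C, c, hc, h⟩ := gaussDensity_le hd hS
  have hC : 0 ≤ C := by
    have := (gaussDensity_pos hS 0).trans_le (h 0)
    simp at this
    exact this.le
  refine ((integrable_exp_neg_mul_sq_norm (half_pos hc)).const_mul ((1 + 2 / c) * C)).mono'
    (continuous_norm.mul continuous_gaussDensity).aestronglyMeasurable (ae_of_all _ fun x => ?_)
  rw [Real.norm_of_nonneg (mul_nonneg (norm_nonneg x) (gaussDensity_pos hS x).le)]
  -- Half of the Gaussian exponent absorbs the factor `‖x‖`.
  have hx : ‖x‖ ≤ (1 + 2 / c) * Real.exp (c / 2 * ‖x‖ ^ 2) := by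
    calc ‖x‖ ≤ 1 + ‖x‖ ^ 2 := by nlinarith [sq_nonneg (‖x‖ - 1)]
      _ ≤ (1 + 2 / c) * (c / 2 * ‖x‖ ^ 2 + 1) := by
        have : (1 + 2 / c) * (c / 2 * ‖x‖ ^ 2 + 1)
            = 1 + ‖x‖ ^ 2 + (c / 2 * ‖x‖ ^ 2 + 2 / c) := by
          field_simp
          ring
        rw [this]
        have : 0 ≤ c / 2 * ‖x‖ ^ 2 + 2 / c := by positivity
        linarith
      _ ≤ _ := by
        gcongr
        exact Real.add_one_le_exp _
  calc ‖x‖ * gaussDensity 0 S x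
      ≤ ((1 + 2 / c) * Real.exp (c / 2 * ‖x‖ ^ 2)) * (C * Real.exp (-c * ‖x‖ ^ 2)) :=
        mul_le_mul hx (h x) (gaussDensity_pos hS x).le (by positivity)
    _ = (1 + 2 / c) * C * (Real.exp (c / 2 * ‖x‖ ^ 2) * Real.exp (-c * ‖x‖ ^ 2)) := by ring
    _ = _ := by
      rw [← Real.exp_add]
      ring_nf

lemma integrable_gaussDensity_sub (hd : 0 < d) (hS : S.PosDef) (y : EuclideanSpace ℝ (Fin d)) :
    Integrable fun h => gaussDensity 0 S (y - h) :=
  (integrable_gaussDensity hd hS).comp_sub_left y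

lemma integrable_gaussDensity_sub_mul_norm (hd : 0 < d) (hS : S.PosDef)
    (y : EuclideanSpace ℝ (Fin d)) :
    Integrable fun h => gaussDensity 0 S (y - h) * ‖h‖ := by
  have h1 := (integrable_norm_mul_gaussDensity hd hS).comp_sub_left y
  refine (h1.add ((integrable_gaussDensity_sub hd hS y).const_mul ‖y‖)).mono'
    ((continuous_gaussDensity.comp (continuous_const.sub continuous_id)).mul
      continuous_norm).aestronglyMeasurable (ae_of_all _ fun h => ?_)
  have hp := (gaussDensity_pos hS (y - h)).le
  rw [Real.norm_of_nonneg (mul_nonneg hp (norm_nonneg h))]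
  have hn : ‖h‖ ≤ ‖y - h‖ + ‖y‖ := by
    have := norm_sub_le y (y - h)
    rw [sub_sub_cancel] at this
    linarith
  calc _ ≤ gaussDensity 0 S (y - h) * (‖y - h‖ + ‖y‖) := by gcongr
    _ = _ := by
      simp only [Pi.add_apply]
      ring

end Gaussian

/-- Integration against an integrable weight `w` with values in a normed space is continuous along
uniformly convergent sequences with bounded limit: eventually `(M + 1) * ‖w‖` is a dominating
function, where `M` bounds `f`. -/
lemma tendsto_weighted_integral {d : ℕ} {E : Type*} [NormedAddCommGroup E] [NormedSpace ℝ E]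
    {f : EuclideanSpace ℝ (Fin d) → ℝ} {fK : ℕ → EuclideanSpace ℝ (Fin d) → ℝ}
    (hf_bdd : ∃ M, ∀ x, |f x| ≤ M) (hfK_meas : ∀ K, Measurable (fK K))
    (hunif : TendstoUniformly fK f atTop) {w : EuclideanSpace ℝ (Fin d) → E}
    (hw : Integrable w) :
    Tendsto (fun K => ∫ h, fK K h • w h) atTop (nhds (∫ h, f h • w h)) := by
  obtain ⟨M, hM⟩ := hf_bdd
  refine tendsto_integral_filter_of_dominated_convergence (fun h => (M + 1) * ‖w h‖)
    (Eventually.of_forall fun K => (hfK_meas K).aestronglyMeasurable.smul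
      hw.aestronglyMeasurable) ?_ (hw.norm.const_mul _)
    (ae_of_all _ fun h => (hunif.tendsto_at h).smul_const _)
  filter_upwards [Metric.tendstoUniformly_iff.mp hunif 1 one_pos] with K hK
  refine ae_of_all _ fun h => ?_
  rw [norm_smul]
  gcongr
  have h1 := hK h
  rw [Real.dist_eq, abs_sub_comm] at h1
  have h2 := abs_sub_abs_le_abs_sub (fK K h) (f h)
  rw [Real.norm_eq_abs]
  linarith [hM h]

/-- Convergence of the GMM-based conditional mean estimators to the optimal conditional
mean estimator, given uniform convergence of the approximating channel densities. -/
theorem gmm_estimator_converges_to_conditional_mean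
    (d : ℕ) (hd : 0 < d) (S : Matrix (Fin d) (Fin d) ℝ) (hS : S.PosDef)
    (g : EuclideanSpace ℝ (Fin d) → ℝ) (hg : g = gaussDensity 0 S)
    (f : EuclideanSpace ℝ (Fin d) → ℝ)
    (hf_cont : Continuous f) (hf_bdd : ∃ M, ∀ x, |f x| ≤ M)
    (hf_nonneg : ∀ x, 0 ≤ f x) (hf_one : ∫ x, f x = 1)
    (hf_mom : Integrable fun h => ‖h‖ * f h)
    (fK : ℕ → EuclideanSpace ℝ (Fin d) → ℝ)
    (hfK_meas : ∀ K, Measurable (fK K)) (hfK_bdd : ∀ K, ∃ M, ∀ x, |fK K x| ≤ M)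
    (hfK_nonneg : ∀ K x, 0 ≤ fK K x) (hfK_one : ∀ K, ∫ x, fK K x = 1)
    (hfK_mom : ∀ K, Integrable fun h => ‖h‖ * fK K h)
    (hunif : TendstoUniformly fK f atTop) :
    ∀ y : EuclideanSpace ℝ (Fin d),
      Tendsto (fun K =>
          ‖(∫ h, g (y - h) * f h)⁻¹ • (∫ h, (g (y - h) * f h) • h) -
            (∫ h, g (y - h) * fK K h)⁻¹ • (∫ h, (g (y - h) * fK K h) • h)‖)
        atTop (nhds 0) := by
  intro y
  subst hg
  set w := fun h => gaussDensity 0 S (y - h) with hw_def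
  have hw_pos : ∀ h, 0 < w h := fun h => gaussDensity_pos hS _
  have hw : Integrable w := integrable_gaussDensity_sub hd hS y
  have hw_cont : Continuous w := continuous_gaussDensity.comp (continuous_const.sub continuous_id)
  have hwh : Integrable fun h => w h • h := by
    refine (integrable_gaussDensity_sub_mul_norm hd hS y).mono'
      (hw_cont.smul continuous_id).aestronglyMeasurable (ae_of_all _ fun h => ?_)
    rw [norm_smul, Real.norm_of_nonneg (hw_pos h).le]
  have hden : Tendsto (fun K => ∫ h, w h * fK K h) atTop (nhds (∫ h, w h * f h)) := by
    simpa only [smul_eq_mul, mul_comm] using tendsto_weighted_integral hf_bdd hfK_meas hunif hw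
  have hnum : Tendsto (fun K => ∫ h, (w h * fK K h) • h) atTop
      (nhds (∫ h, (w h * f h) • h)) := by
    simpa only [smul_smul, mul_comm] using tendsto_weighted_integral hf_bdd hfK_meas hunif hwh
  have hden_ne : ∫ h, w h * f h ≠ 0 := by
    intro h0
    have hint : Integrable fun h => w h * f h := by
      obtain ⟨M, hM⟩ := hf_bdd
      exact hw.mul_bdd (c := M) hf_cont.aestronglyMeasurable (ae_of_all _ hM)
    rw [integral_eq_zero_iff_of_nonneg (fun h => mul_nonneg (hw_pos h).le (hf_nonneg h)) hint] at h0
    have hf0 : f =ᵐ[volume] 0 := by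
      filter_upwards [h0] with h hh
      exact (mul_eq_zero.mp hh).resolve_left (hw_pos h).ne'
    rw [integral_congr_ae hf0] at hf_one
    simp at hf_one
  have hlim := ((hden.inv₀ hden_ne).smul hnum).const_sub
    ((∫ h, w h * f h)⁻¹ • (∫ h, (w h * f h) • h))
  rw [sub_self] at hlim
  simpa using hlim.norm
end

section
/- Let d be a positive natural number, let g : ℝ^d → ℝ be a nonnegative measurable function, let f, f' : ℝ^d → ℝ be nonnegative measurable functions, and fix y ∈ ℝ^d. Assume that the functions h ↦ ‖h‖ g(y−h), h ↦ h·g(y−h) f(h), and h ↦ h·g(y−h) f'(h) are integrable, and that a := ∫ g(y−h) f(h) dh > 0 and a' := ∫ g(y−h) f'(h) dh > 0. Then ‖(∫ h·g(y−h) f(h) dh)/a − (∫ h·g(y−h) f'(h) dh)/a'‖ ≤ (sup_{h∈ℝ^d} | f(h)/a − f'(h)/a' |) · ∫ ‖h‖ g(y−h) dh. -/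
/-!
By linearity the difference of the two estimates is the single integral
`∫ (f h / a - f' h / a') g (y - h) h dh`. Its norm is at most the integral of the norm of the
integrand, which is pointwise at most the supremum of `|f / a - f' / a'|` times `‖h‖ g (y - h)`.
The estimate is carried out with lower Lebesgue integrals, so that an infinite supremum
(including the product `∞ * 0 = 0`) needs no separate case.
-/

open MeasureTheory Filter

/-- Key error bound: the distance between the conditional mean estimates under two channel
densities `f` and `f'` is controlled by the supremum distance of the normalized posterior
numerators times the first moment of the shifted noise density. -/
theorem conditional_mean_estimate_error_bound
    (d : ℕ) (hd : 0 < d)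
    (g f f' : EuclideanSpace ℝ (Fin d) → ℝ)
    (hg_meas : Measurable g) (hg_nonneg : ∀ x, 0 ≤ g x)
    (hf_meas : Measurable f) (hf_nonneg : ∀ x, 0 ≤ f x)
    (hf'_meas : Measurable f') (hf'_nonneg : ∀ x, 0 ≤ f' x)
    (y : EuclideanSpace ℝ (Fin d))
    (hmom : Integrable fun h => ‖h‖ * g (y - h))
    (hint : Integrable fun h => (g (y - h) * f h) • h)
    (hint' : Integrable fun h => (g (y - h) * f' h) • h)
    (a a' : ℝ)
    (ha_def : a = ∫ h, g (y - h) * f h) (ha : 0 < a)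
    (ha'_def : a' = ∫ h, g (y - h) * f' h) (ha' : 0 < a') :
    ENNReal.ofReal
        ‖a⁻¹ • (∫ h, (g (y - h) * f h) • h) - a'⁻¹ • (∫ h, (g (y - h) * f' h) • h)‖ ≤
      (⨆ h : EuclideanSpace ℝ (Fin d), ENNReal.ofReal |f h / a - f' h / a'|) *
        ENNReal.ofReal (∫ h, ‖h‖ * g (y - h)) := by
  have hdiff : a⁻¹ • (∫ h, (g (y - h) * f h) • h) - a'⁻¹ • (∫ h, (g (y - h) * f' h) • h)
      = ∫ h, ((f h / a - f' h / a') * g (y - h)) • h := by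
    rw [← integral_smul, ← integral_smul, ← integral_sub (hint.fun_smul a⁻¹) (hint'.fun_smul a'⁻¹)]
    congr 1
    funext h
    simp only [smul_smul, ← sub_smul]
    congr 1
    ring
  have hmeas : Measurable fun h : EuclideanSpace ℝ (Fin d) =>
      ENNReal.ofReal (‖h‖ * g (y - h)) := by fun_prop
  rw [hdiff, ofReal_norm, ofReal_integral_eq_lintegral_ofReal hmom
    (Eventually.of_forall fun h => mul_nonneg (norm_nonneg h) (hg_nonneg _)),
    -- Measurability of the integrand lets the constant be extracted even when it is `∞`.
    ← lintegral_const_mul _ hmeas]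
  refine (enorm_integral_le_lintegral_enorm _).trans (lintegral_mono fun h => ?_)
  have hpt : ‖((f h / a - f' h / a') * g (y - h)) • h‖ₑ
      = ENNReal.ofReal |f h / a - f' h / a'| * ENNReal.ofReal (‖h‖ * g (y - h)) := by
    rw [← ofReal_norm, ← ENNReal.ofReal_mul (abs_nonneg _), norm_smul, norm_mul,
      Real.norm_eq_abs, Real.norm_of_nonneg (hg_nonneg _)]
    congr 1
    ring
  rw [hpt]
  gcongr
  exact le_iSup (fun h => ENNReal.ofReal |f h / a - f' h / a'|) h
end
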